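/- The pair of local functions N₁_{(i)b}^{(a)} = χ^a_{bf} p^f_i and N₂_{(i)j}^{(a)} = γ^r_{ij}[(2e/m₀) A^{(a)}_{(r)} − p^a_r] − (e/m₀)[∂A^{(a)}_{(i)}/∂x^j + ∂A^{(a)}_{(j)}/∂x^i] is a nonlinear connection on the dual 1-jet space, in the following sense: for all smooth diffeomorphisms σ: T → T̃ ⊆ ℝ^m and τ: X → X̃ ⊆ ℝ^n with the transformed objects h̃_{ãb̃}(t̃) = h_{ab}(t) (∂t^a/∂t̃^ã)(∂t^b/∂t̃^b̃), φ̃_{ĩj̃}(x̃) = φ_{ij}(x)(∂x^i/∂x̃^ĩ)(∂x^j/∂x̃^j̃), Ã^{(ã)}_{(ĩ)} = A^{(a)}_{(i)} (∂t̃^ã/∂t^a)(∂x^i/∂x̃^ĩ), and the induced polymomenta transformation p̃^ã_ĩ = p^a_i (∂t̃^ã/∂t^a)(∂x^i/∂x̃^ĩ), the local 1-forms δp^a_i = dp^a_i + N₁_{(i)b}^{(a)} dt^b + N₂_{(i)j}^{(a)} dx^j transform tensorially: δp̃^ã_ĩ = (∂t̃^ã/∂t^a)(∂x^i/∂x̃^ĩ)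 δp^a_i, where δp̃ is built from (h̃, φ̃, Ã) by the same formulas (i.e., the two 1-forms agree on every tangent vector of T × X × ℝ^{m·n}). -/

import Mathlib

open scoped BigOperators
open Set

noncomputable section

/-- Partial derivative of a real-valued function on `ℝ^k` in the `a`-th coordinate direction. -/
def pd {k : ℕ} (f : (Fin k → ℝ) → ℝ) (a : Fin k) (t : Fin k → ℝ) : ℝ :=
  fderiv ℝ f t (Pi.single a 1)

/-- The Christoffel symbols `χ^a_{bc}` of a (semi-)Riemannian metric `g`. -/
def christoffel {k : ℕ} (g : (Fin k → ℝ) → Matrix (Fin k) (Fin k) ℝ)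
    (a b c : Fin k) (t : Fin k → ℝ) : ℝ :=
  (1 / 2) * ∑ d, (g t)⁻¹ a d *
    (pd (fun s => g s d c) b t + pd (fun s => g s b d) c t - pd (fun s => g s b c) d t)

/-- The curvature tensor `χ^f_{g a b}` of a (semi-)Riemannian metric. -/
def curvTensor {k : ℕ} (g : (Fin k → ℝ) → Matrix (Fin k) (Fin k) ℝ)
    (f gi a b : Fin k) (t : Fin k → ℝ) : ℝ :=
  pd (christoffel g f b gi) a t - pd (christoffel g f a gi) b t
    + ∑ hh, christoffel g f a hh t * christoffel g hh b gi t
    - ∑ hh, christoffel g f b hh t * christoffel g hh a gi t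

/-- The Ricci tensor `χ_{ab} = χ^f_{abf}`. -/
def ricci {k : ℕ} (g : (Fin k → ℝ) → Matrix (Fin k) (Fin k) ℝ)
    (a b : Fin k) (t : Fin k → ℝ) : ℝ :=
  ∑ f, curvTensor g f a b f t

/-- The scalar curvature `g^{ab} Ric_{ab}`. -/
def scalarCurv {k : ℕ} (g : (Fin k → ℝ) → Matrix (Fin k) (Fin k) ℝ)
    (t : Fin k → ℝ) : ℝ :=
  ∑ a, ∑ b, (g t)⁻¹ a b * ricci g a b t

/-- Partial derivative in a temporal direction of a function on `T × X`. -/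
def pdt {m n : ℕ} (f : (Fin m → ℝ) × (Fin n → ℝ) → ℝ) (a : Fin m)
    (q : (Fin m → ℝ) × (Fin n → ℝ)) : ℝ :=
  fderiv ℝ f q (Pi.single a 1, 0)

/-- Partial derivative in a spatial direction of a function on `T × X`. -/
def pdx {m n : ℕ} (f : (Fin m → ℝ) × (Fin n → ℝ) → ℝ) (i : Fin n)
    (q : (Fin m → ℝ) × (Fin n → ℝ)) : ℝ :=
  fderiv ℝ f q (0, Pi.single i 1)

/-- The local model of the dual 1-jet space: coordinates `(t^a, x^i, p^a_i)`. -/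
abbrev Jet (m n : ℕ) := (Fin m → ℝ) × (Fin n → ℝ) × (Fin m → Fin n → ℝ)

/-- `∂/∂t^a` on the dual 1-jet space. -/
def pdtJ {m n : ℕ} (F : Jet m n → ℝ) (a : Fin m) (q : Jet m n) : ℝ :=
  fderiv ℝ F q (Pi.single a 1, 0, 0)

/-- `∂/∂x^i` on the dual 1-jet space. -/
def pdxJ {m n : ℕ} (F : Jet m n → ℝ) (i : Fin n) (q : Jet m n) : ℝ :=
  fderiv ℝ F q (0, Pi.single i 1, 0)

/-- `∂/∂p^f_r` on the dual 1-jet space. -/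
def pdpJ {m n : ℕ} (F : Jet m n → ℝ) (f : Fin m) (r : Fin n) (q : Jet m n) : ℝ :=
  fderiv ℝ F q (0, 0, Pi.single f (Pi.single r 1))

/-- The temporal component `N₁_{(i)b}^{(a)} = χ^a_{bf} p^f_i` of the canonical
nonlinear connection. -/
def N1 {m n : ℕ} (h : (Fin m → ℝ) → Matrix (Fin m) (Fin m) ℝ)
    (a : Fin m) (i : Fin n) (b : Fin m) (q : Jet m n) : ℝ :=
  ∑ f, christoffel h a b f q.1 * q.2.2 f i

/-- The spatial component
`N₂_{(i)j}^{(a)} = γ^r_{ij}[(2e/m₀) A^{(a)}_{(r)} − p^a_r] − (e/m₀)[∂A^{(a)}_{(i)}/∂x^j + ∂A^{(a)}_{(j)}/∂x^i]`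
of the canonical nonlinear connection. -/
def N2 {m n : ℕ} (φ : (Fin n → ℝ) → Matrix (Fin n) (Fin n) ℝ)
    (A : Fin m → Fin n → (Fin m → ℝ) × (Fin n → ℝ) → ℝ) (e m₀ : ℝ)
    (a : Fin m) (i j : Fin n) (q : Jet m n) : ℝ :=
  ∑ r, christoffel φ r i j q.2.1 * ((2 * e / m₀) * A a r (q.1, q.2.1) - q.2.2 a r)
    - (e / m₀) * (pdx (A a i) j (q.1, q.2.1) + pdx (A a j) i (q.1, q.2.1))

/-- The adapted derivation `δ/δt^a = ∂/∂t^a − N₁_{(r)a}^{(f)} ∂/∂p^f_r`. -/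
def deltaT {m n : ℕ} (h : (Fin m → ℝ) → Matrix (Fin m) (Fin m) ℝ)
    (F : Jet m n → ℝ) (a : Fin m) (q : Jet m n) : ℝ :=
  pdtJ F a q - ∑ f, ∑ r, N1 h f r a q * pdpJ F f r q

/-- The adapted derivation `δ/δx^i = ∂/∂x^i − N₂_{(r)i}^{(f)} ∂/∂p^f_r`. -/
def deltaX {m n : ℕ} (φ : (Fin n → ℝ) → Matrix (Fin n) (Fin n) ℝ)
    (A : Fin m → Fin n → (Fin m → ℝ) × (Fin n → ℝ) → ℝ) (e m₀ : ℝ)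
    (F : Jet m n → ℝ) (i : Fin n) (q : Jet m n) : ℝ :=
  pdxJ F i q - ∑ f, ∑ r, N2 φ A e m₀ f r i q * pdpJ F f r q


/-- The Jacobian matrix of a map `σ : ℝ^k → ℝ^k`: `(Jσ t) ã a = ∂σ^ã/∂t^a`. -/
def jacobian {k : ℕ} (σ : (Fin k → ℝ) → (Fin k → ℝ)) (t : Fin k → ℝ) :
    Matrix (Fin k) (Fin k) ℝ :=
  Matrix.of fun atil a => pd (fun s => σ s atil) a t

/-- The local 1-form `δp^a_i = dp^a_i + N₁_{(i)b}^{(a)} dt^b + N₂_{(i)j}^{(a)} dx^j`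
evaluated at the point `q` on the tangent vector `V`. -/
def deltaPform {m n : ℕ} (h : (Fin m → ℝ) → Matrix (Fin m) (Fin m) ℝ)
    (φ : (Fin n → ℝ) → Matrix (Fin n) (Fin n) ℝ)
    (A : Fin m → Fin n → (Fin m → ℝ) × (Fin n → ℝ) → ℝ) (e m₀ : ℝ)
    (a : Fin m) (i : Fin n) (q : Jet m n) (V : Jet m n) : ℝ :=
  V.2.2 a i + ∑ b, N1 h a i b q * V.1 b + ∑ j, N2 φ A e m₀ a i j q * V.2.1 j

lemma christ_alg {k : ℕ} (J G Gt : Matrix (Fin k) (Fin k) ℝ)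
    (hJ : IsUnit J.det) (hGt : IsUnit Gt.det) (hsym : Gt.IsSymm)
    (hG : G = J.transpose * Gt * J)
    (D Dt H : Fin k → Fin k → Fin k → ℝ)
    (hH : ∀ x b c, H x b c = H x c b)
    (hD : ∀ a b c, D a b c = (∑ x, ∑ y, ∑ z, Dt x y z * J x a * J y b * J z c)
      + ∑ x, ∑ y, Gt x y * (H x a c * J y b + J x a * H y b c))
    (x b c : Fin k) :
    ∑ a, J x a * ((1 / 2) * ∑ d, G⁻¹ a d * (D d c b + D b d c - D b c d))
      = (∑ y, ∑ z, ((1 / 2) * ∑ w, Gt⁻¹ x w * (Dt w z y + Dt y w z - Dt y z w)) * J y b * J z c)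
        + H x b c := by
  have hGs : ∀ x y, Gt x y = Gt y x := fun x y => by
    conv_lhs => rw [← hsym]
    rfl
  set W : Fin k → ℝ := fun w => ∑ y, ∑ z, (Dt w z y + Dt y w z - Dt y z w) * J y b * J z c with hW
  set Hv : Fin k → ℝ := fun w => H w b c with hHv
  set S : Fin k → ℝ := fun d => D d c b + D b d c - D b c d with hS
  have key : S = J.transpose.mulVec (W + (2:ℝ) • Gt.mulVec Hv) := by
    funext d
    have e1 : ∑ x, ∑ y, ∑ z, Dt x y z * J x d * J y c * J z b
        = ∑ w, J w d * ∑ y, ∑ z, Dt w z y * J y b * J z c := by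
      refine Finset.sum_congr rfl fun w _ => ?_
      rw [Finset.sum_comm]
      simp only [Finset.mul_sum]
      refine Finset.sum_congr rfl fun y _ => Finset.sum_congr rfl fun z _ => by ring
    have e2 : ∑ x, ∑ y, ∑ z, Dt x y z * J x b * J y d * J z c
        = ∑ w, J w d * ∑ y, ∑ z, Dt y w z * J y b * J z c := by
      rw [Finset.sum_comm]
      refine Finset.sum_congr rfl fun w _ => ?_
      simp only [Finset.mul_sum]
      refine Finset.sum_congr rfl fun y _ => Finset.sum_congr rfl fun z _ => by ring
    have e3 : ∑ x, ∑ y, ∑ z, Dt x y z * J x b * J y c * J z d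
        = ∑ w, J w d * ∑ y, ∑ z, Dt y z w * J y b * J z c := by
      have : ∀ x, ∑ y, ∑ z, Dt x y z * J x b * J y c * J z d
        = ∑ z, ∑ y, Dt x y z * J x b * J y c * J z d := fun x => Finset.sum_comm
      simp only [this]
      rw [Finset.sum_comm]
      refine Finset.sum_congr rfl fun w _ => ?_
      simp only [Finset.mul_sum]
      refine Finset.sum_congr rfl fun y _ => Finset.sum_congr rfl fun z _ => by ring
    have f1 : ∑ x, ∑ y, Gt x y * (H x b c * J y d) = ∑ x, ∑ y, Gt x y * (J x d * H y b c) := by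
      rw [Finset.sum_comm]
      refine Finset.sum_congr rfl fun y _ => Finset.sum_congr rfl fun z _ => ?_
      rw [hGs]; ring
    have f2 : ∑ w, J w d * (∑ y, Gt w y * H y b c) = ∑ x, ∑ y, Gt x y * (J x d * H y b c) := by
      simp only [Finset.mul_sum]
      refine Finset.sum_congr rfl fun y _ => Finset.sum_congr rfl fun z _ => ?_
      ring
    simp only [hS, hD, e1, e2, e3]
    simp only [Matrix.mulVec, dotProduct, Matrix.transpose_apply, Pi.add_apply, Pi.smul_apply,
      smul_eq_mul, hW, hHv, mul_add, Finset.sum_add_distrib, f1, sub_mul, add_mul,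
      Finset.sum_sub_distrib, mul_sub]
    have f3 : ∑ w, J w d * (2 * ∑ y, Gt w y * H y b c)
        = 2 * ∑ x, ∑ y, Gt x y * (J x d * H y b c) := by
      rw [← f2, Finset.mul_sum]
      exact Finset.sum_congr rfl fun y _ => by ring
    rw [f3]
    simp only [hH _ d b, hH _ c b, hH _ d c]
    ring
  have hinv : J * (G⁻¹ * J.transpose) = Gt⁻¹ := by
    have hJT : IsUnit J.transpose.det := by rwa [Matrix.det_transpose]
    rw [hG, Matrix.mul_inv_rev, Matrix.mul_inv_rev, Matrix.mul_assoc, Matrix.mul_assoc,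
      Matrix.nonsing_inv_mul _ hJT, Matrix.mul_one, ← Matrix.mul_assoc,
      Matrix.mul_nonsing_inv _ hJ, Matrix.one_mul]
  have main : J.mulVec (G⁻¹.mulVec S) = Gt⁻¹.mulVec W + (2:ℝ) • Hv := by
    rw [key, Matrix.mulVec_mulVec, Matrix.mulVec_mulVec, Matrix.mul_assoc, hinv, Matrix.mulVec_add,
      Matrix.mulVec_smul, Matrix.mulVec_mulVec, Matrix.nonsing_inv_mul _ hGt, Matrix.one_mulVec]
  have m1 := congrFun main x
  have l : ∑ a, J x a * ((1 / 2) * ∑ d, G⁻¹ a d * S d) = (1/2) * J.mulVec (G⁻¹.mulVec S) x := by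
    simp only [Matrix.mulVec, dotProduct]
    rw [Finset.mul_sum]
    exact Finset.sum_congr rfl fun y _ => by ring
  have r : ∑ y, ∑ z, ((1 / 2) * ∑ w, Gt⁻¹ x w * (Dt w z y + Dt y w z - Dt y z w)) * J y b * J z c
      = (1/2) * Gt⁻¹.mulVec W x := by
    simp only [Matrix.mulVec, dotProduct, hW, Finset.mul_sum, Finset.sum_mul]
    rw [Finset.sum_comm_cycle]
    refine Finset.sum_congr rfl fun w _ => Finset.sum_congr rfl fun y _ =>
      Finset.sum_congr rfl fun z _ => by ring
  rw [l, r, m1]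
  simp only [Pi.add_apply, Pi.smul_apply, smul_eq_mul, hHv]
  ring

lemma fderiv_eq_sum_pd {k : ℕ} (f : (Fin k → ℝ) → ℝ) (t v : Fin k → ℝ) :
    fderiv ℝ f t v = ∑ a, pd f a t * v a := by
  conv_lhs => rw [← Finset.univ_sum_single v]
  rw [map_sum]
  refine Finset.sum_congr rfl fun a _ => ?_
  have : (Pi.single a (v a) : Fin k → ℝ) = v a • Pi.single a (1:ℝ) := by
    rw [← Pi.single_smul]; simp
  rw [this, map_smul, pd, smul_eq_mul, mul_comm]

lemma fderiv_comp_apply' {k : ℕ} {σ : (Fin k → ℝ) → (Fin k → ℝ)} {t : Fin k → ℝ}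
    (hσ : DifferentiableAt ℝ σ t) (v : Fin k → ℝ) (a : Fin k) :
    fderiv ℝ σ t v a = ∑ b, jacobian σ t a b * v b := by
  have : fderiv ℝ (fun s => σ s a) t v = fderiv ℝ σ t v a := by
    rw [fderiv_apply hσ]; rfl
  rw [← this, fderiv_eq_sum_pd]; rfl

lemma fderiv_sgl {k : ℕ} {σ : (Fin k → ℝ) → (Fin k → ℝ)} {t : Fin k → ℝ}
    (hσ : DifferentiableAt ℝ σ t) (a b : Fin k) :
    fderiv ℝ σ t (Pi.single b 1) a = jacobian σ t a b := by
  rw [fderiv_comp_apply' hσ]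
  simp [Pi.single_apply]

lemma pd_comp {k : ℕ} {σ : (Fin k → ℝ) → (Fin k → ℝ)} {t : Fin k → ℝ}
    (hσ : DifferentiableAt ℝ σ t) {f : (Fin k → ℝ) → ℝ} (hf : DifferentiableAt ℝ f (σ t))
    (c : Fin k) : pd (fun s => f (σ s)) c t = ∑ z, pd f z (σ t) * jacobian σ t z c := by
  have : (fun s => f (σ s)) = f ∘ σ := rfl
  rw [pd, this, fderiv_comp t hf hσ, ContinuousLinearMap.comp_apply, fderiv_eq_sum_pd]
  simp only [fderiv_sgl hσ]

lemma jac_contDiffAt {k : ℕ} {σ : (Fin k → ℝ) → (Fin k → ℝ)} {t : Fin k → ℝ}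
    (hσ : ContDiffAt ℝ (⊤ : ℕ∞) σ t) (a b : Fin k) :
    ContDiffAt ℝ (⊤ : ℕ∞) (fun s => jacobian σ s a b) t := by
  have h1 : ContDiffAt ℝ (⊤ : ℕ∞) (fun s => σ s a) t := (contDiffAt_pi.1 hσ) a
  have h2 : ContDiffAt ℝ (⊤ : ℕ∞) (fderiv ℝ (fun s => σ s a)) t := h1.fderiv_right (by simp)
  exact h2.clm_apply contDiffAt_const

lemma jac_symm {k : ℕ} {σ : (Fin k → ℝ) → (Fin k → ℝ)} {t : Fin k → ℝ}
    (hσ : ContDiffAt ℝ (⊤ : ℕ∞) σ t) (a b c : Fin k) :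
    pd (fun s => jacobian σ s a b) c t = pd (fun s => jacobian σ s a c) b t := by
  have h1 : ContDiffAt ℝ (⊤ : ℕ∞) (fun s => σ s a) t := (contDiffAt_pi.1 hσ) a
  have h2 : ContDiffAt ℝ (⊤ : ℕ∞) (fderiv ℝ (fun s => σ s a)) t := h1.fderiv_right (by simp)
  have h3 : DifferentiableAt ℝ (fderiv ℝ (fun s => σ s a)) t := h2.differentiableAt (by simp)
  have hs : IsSymmSndFDerivAt ℝ (fun s => σ s a) t := by
    refine h1.isSymmSndFDerivAt ?_
    simp only [minSmoothness_of_isRCLikeNormedField]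
    exact WithTop.coe_le_coe.2 (le_top : (2 : ℕ∞) ≤ ⊤)
  have e : ∀ b c : Fin k, pd (fun s => jacobian σ s a b) c t
      = fderiv ℝ (fderiv ℝ (fun s => σ s a)) t (Pi.single c 1) (Pi.single b 1) := by
    intro b c
    have : (fun s => jacobian σ s a b) = fun s => fderiv ℝ (fun s => σ s a) s (Pi.single b 1) := rfl
    rw [pd, this, fderiv_clm_apply h3 (differentiableAt_const _)]
    simp
  rw [e, e]; exact hs _ _

lemma pd_mul {k : ℕ} {f g : (Fin k → ℝ) → ℝ} {t : Fin k → ℝ} (c : Fin k)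
    (hf : DifferentiableAt ℝ f t) (hg : DifferentiableAt ℝ g t) :
    pd (fun s => f s * g s) c t = pd f c t * g t + f t * pd g c t := by
  simp only [pd]
  rw [fderiv_fun_mul hf hg]
  simp
  ring

lemma pd_sum {k : ℕ} {ι : Type} [Fintype ι] {f : ι → (Fin k → ℝ) → ℝ} {t : Fin k → ℝ} (c : Fin k)
    (hf : ∀ i, DifferentiableAt ℝ (f i) t) :
    pd (fun s => ∑ i, f i s) c t = ∑ i, pd (f i) c t := by
  simp only [pd]
  rw [fderiv_fun_sum fun i _ => hf i]
  simp

lemma pd_congr {k : ℕ} {f g : (Fin k → ℝ) → ℝ} {t : Fin k → ℝ} (c : Fin k) {T : Set (Fin k → ℝ)}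
    (hT : IsOpen T) (ht : t ∈ T) (h : ∀ s ∈ T, f s = g s) : pd f c t = pd g c t := by
  have : f =ᶠ[nhds t] g := by
    filter_upwards [hT.mem_nhds ht] with s hs using h s hs
  simp only [pd]
  rw [this.fderiv_eq]

lemma christoffel_law {k : ℕ} (T Ttil : Set (Fin k → ℝ)) (hT : IsOpen T) (hTtil : IsOpen Ttil)
    (σ : (Fin k → ℝ) → (Fin k → ℝ)) (hσsm : ContDiffOn ℝ (⊤ : ℕ∞) σ T)
    (hσbij : Set.BijOn σ T Ttil)
    (hσJ : ∀ t ∈ T, IsUnit (jacobian σ t).det)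
    (h htil : (Fin k → ℝ) → Matrix (Fin k) (Fin k) ℝ)
    (hsymm : ∀ t ∈ T, (h t).IsSymm) (hinv : ∀ t ∈ T, IsUnit (h t).det)
    (htilsm : ∀ a b, ContDiffOn ℝ (⊤ : ℕ∞) (fun t => htil t a b) Ttil)
    (hhtrans : ∀ t ∈ T, ∀ atil btil : Fin k,
      htil (σ t) atil btil
        = ∑ a, ∑ b, h t a b * (jacobian σ t)⁻¹ a atil * (jacobian σ t)⁻¹ b btil)
    (t : Fin k → ℝ) (ht : t ∈ T) (x b c : Fin k) :
    ∑ a, jacobian σ t x a * christoffel h a b c t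
      = (∑ y, ∑ z, christoffel htil x y z (σ t) * jacobian σ t y b * jacobian σ t z c)
        + pd (fun s => jacobian σ s x b) c t := by
  have hmat : ∀ s ∈ T, htil (σ s) = ((jacobian σ s)⁻¹).transpose * h s * (jacobian σ s)⁻¹ := by
    intro s hs
    ext i j
    rw [hhtrans s hs, Finset.sum_comm]
    simp only [Matrix.mul_apply, Matrix.transpose_apply, Finset.sum_mul]
    refine Finset.sum_congr rfl fun y _ => Finset.sum_congr rfl fun z _ => by ring
  have hmat' : ∀ s ∈ T, h s = (jacobian σ s).transpose * htil (σ s) * jacobian σ s := by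
    intro s hs
    rw [hmat s hs, Matrix.transpose_nonsing_inv]
    have h1 := hσJ s hs
    have h2 : IsUnit (jacobian σ s).transpose.det := by rwa [Matrix.det_transpose]
    rw [Matrix.mul_assoc, Matrix.mul_assoc, Matrix.nonsing_inv_mul _ h1, Matrix.mul_one,
      ← Matrix.mul_assoc, Matrix.mul_nonsing_inv _ h2, Matrix.one_mul]
  have hσt : ContDiffAt ℝ (⊤ : ℕ∞) σ t := hσsm.contDiffAt (hT.mem_nhds ht)
  have hσd : DifferentiableAt ℝ σ t := hσt.differentiableAt (by simp)
  have hσT : σ t ∈ Ttil := hσbij.mapsTo ht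
  have hJd : ∀ a b, DifferentiableAt ℝ (fun s => jacobian σ s a b) t := fun a b =>
    (jac_contDiffAt hσt a b).differentiableAt (by simp)
  have hgd : ∀ a b, DifferentiableAt ℝ (fun s => htil s a b) (σ t) := fun a b =>
    ((htilsm a b).contDiffAt (hTtil.mem_nhds hσT)).differentiableAt (by simp)
  have hgd' : ∀ a b, DifferentiableAt ℝ (fun s => htil (σ s) a b) t := fun a b =>
    (hgd a b).comp t hσd
  refine christ_alg (jacobian σ t) (h t) (htil (σ t)) (hσJ t ht) ?_ ?_ (hmat' t ht)
    (fun a b c => pd (fun s => h s a b) c t) (fun a b c => pd (fun s => htil s a b) c (σ t))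
    (fun a b c => pd (fun s => jacobian σ s a b) c t) (fun a b c => jac_symm hσt a b c) ?_ x b c
  · have := hmat' t ht
    have h3 := hinv t ht
    rw [this, Matrix.det_mul, Matrix.det_mul] at h3
    exact isUnit_of_mul_isUnit_right (isUnit_of_mul_isUnit_left h3)
  · rw [hmat t ht, Matrix.IsSymm, Matrix.transpose_mul, Matrix.transpose_mul,
      Matrix.transpose_transpose, hsymm t ht, Matrix.mul_assoc]
  · intro a b c
    have e : ∀ s ∈ T, h s a b
        = ∑ x, ∑ y, htil (σ s) x y * (jacobian σ s x a * jacobian σ s y b) := by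
      intro s hs
      conv_lhs => rw [hmat' s hs]
      rw [Finset.sum_comm]
      simp only [Matrix.mul_apply, Matrix.transpose_apply, Finset.sum_mul]
      refine Finset.sum_congr rfl fun y _ => Finset.sum_congr rfl fun z _ => by ring
    rw [pd_congr c hT ht e, pd_sum]
    · rw [← Finset.sum_add_distrib]
      refine Finset.sum_congr rfl fun x _ => ?_
      rw [pd_sum]
      · rw [← Finset.sum_add_distrib]
        refine Finset.sum_congr rfl fun y _ => ?_
        rw [pd_mul c (hgd' x y) ((hJd x a).fun_mul (hJd y b)), pd_mul c (hJd x a) (hJd y b),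
          pd_comp hσd (hgd x y), Finset.sum_mul]
        congr 1
        exact Finset.sum_congr rfl fun z _ => by ring
      · intro y
        exact (hgd' x y).mul ((hJd x a).mul (hJd y b))
    · intro x
      exact DifferentiableAt.fun_sum fun y _ => (hgd' x y).mul ((hJd x a).mul (hJd y b))

lemma inv_entry_diff {E : Type*} [NormedAddCommGroup E] [NormedSpace ℝ E] {k : ℕ}
    {M : E → Matrix (Fin k) (Fin k) ℝ} {q : E}
    (hM : ∀ i j, DifferentiableAt ℝ (fun s => M s i j) q) (hd : IsUnit (M q).det) (i j : Fin k) :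
    DifferentiableAt ℝ (fun s => (M s)⁻¹ i j) q := by
  have hdet : ∀ (N : E → Matrix (Fin k) (Fin k) ℝ),
      (∀ i j, DifferentiableAt ℝ (fun s => N s i j) q) →
      DifferentiableAt ℝ (fun s => (N s).det) q := by
    intro N hN
    simp only [Matrix.det_apply']
    refine DifferentiableAt.fun_sum fun π _ => ?_
    refine (differentiableAt_const _).mul ?_
    exact (HasFDerivAt.finsetProd (fun i _ => (hN (π i) i).hasFDerivAt)).differentiableAt
  simp only [Matrix.inv_def, Matrix.smul_apply, smul_eq_mul, Ring.inverse_eq_inv',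
    Matrix.adjugate_apply]
  refine DifferentiableAt.mul ((hdet M hM).inv hd.ne_zero) (hdet _ ?_)
  intro a b
  simp only [Matrix.updateRow_apply]
  split_ifs
  · exact differentiableAt_const _
  · exact hM _ _

lemma pdx_eq {m n : ℕ} {f : (Fin m → ℝ) × (Fin n → ℝ) → ℝ} {t : Fin m → ℝ} {x : Fin n → ℝ}
    (hf : DifferentiableAt ℝ f (t, x)) (i : Fin n) :
    pd (fun y => f (t, y)) i x = pdx f i (t, x) := by
  have h := hf.hasFDerivAt.comp x (hasFDerivAt_prodMk_right t x)
  have h' : HasFDerivAt (fun y => f (t, y)) _ x := h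
  rw [pd, h'.fderiv, pdx]
  simp

lemma contr_alg {n : ℕ} (Jt : Matrix (Fin n) (Fin n) ℝ) (V : Fin n → ℝ) (k : Fin n)
    (Q : Fin n → Fin n → ℝ) :
    ∑ i, (∑ l, Q i l * (∑ c, Jt l c * V c)) * Jt i k
      = ∑ j, (∑ i, ∑ l, Q i l * Jt i k * Jt l j) * V j := by
  simp only [Finset.mul_sum, Finset.sum_mul]
  symm
  rw [Finset.sum_comm]
  refine Finset.sum_congr rfl fun i _ => ?_
  rw [Finset.sum_comm]
  refine Finset.sum_congr rfl fun l _ => Finset.sum_congr rfl fun c _ => by ring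

lemma final_alg {m n : ℕ} (Js : Matrix (Fin m) (Fin m) ℝ) (Jt : Matrix (Fin n) (Fin n) ℝ)
    (hJt : IsUnit Jt.det)
    (χ χt Hs : Fin m → Fin m → Fin m → ℝ) (γ γt Ht : Fin n → Fin n → Fin n → ℝ)
    (hχ : ∀ x b c, ∑ a, Js x a * χ a b c = (∑ y, ∑ z, χt x y z * Js y b * Js z c) + Hs x b c)
    (hHs : ∀ x b c, Hs x b c = Hs x c b)
    (hγ : ∀ x b c, ∑ a, Jt x a * γ a b c = (∑ y, ∑ z, γt x y z * Jt y b * Jt z c) + Ht x b c)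
    (hHt : ∀ x b c, Ht x b c = Ht x c b)
    (p Pt A At : Fin m → Fin n → ℝ) (dA dAt : Fin m → Fin n → Fin n → ℝ)
    (hP : ∀ x k, ∑ i, Pt x i * Jt i k = ∑ a, p a k * Js x a)
    (hA : ∀ x k, ∑ i, At x i * Jt i k = ∑ a, A a k * Js x a)
    (hdA : ∀ x k j, (∑ i, (∑ l, dAt x i l * Jt l j) * Jt i k) + ∑ i, At x i * Ht i k j
      = ∑ a, dA a k j * Js x a)
    (V1 : Fin m → ℝ) (V2 : Fin n → ℝ) (V3 : Fin m → Fin n → ℝ) (dP : Fin n → ℝ) (x : Fin m)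
    (hdP : ∀ k, (∑ i, dP i * Jt i k) + ∑ i, Pt x i * ∑ j, Ht i k j * V2 j
      = ∑ a, (V3 a k * Js x a + p a k * ∑ b, Hs x a b * V1 b))
    (e m₀ : ℝ) (i : Fin n) :
    dP i + ∑ b, (∑ f, χt x b f * Pt f i) * (∑ c, Js b c * V1 c)
      + ∑ j, (∑ r, γt r i j * ((2 * e / m₀) * At x r - Pt x r)
          - (e / m₀) * (dAt x i j + dAt x j i)) * (∑ c, Jt j c * V2 c)
    = ∑ a, ∑ k, Js x a * Jt⁻¹ k i * (V3 a k + ∑ b, (∑ f, χ a b f * p f k) * V1 b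
        + ∑ j, (∑ r, γ r k j * ((2 * e / m₀) * A a r - p a r)
          - (e / m₀) * (dA a k j + dA a j k)) * V2 j) := by
  set L : Fin n → ℝ := fun i => dP i + ∑ b, (∑ f, χt x b f * Pt f i) * (∑ c, Js b c * V1 c)
      + ∑ j, (∑ r, γt r i j * ((2 * e / m₀) * At x r - Pt x r)
          - (e / m₀) * (dAt x i j + dAt x j i)) * (∑ c, Jt j c * V2 c) with hL
  set R : Fin m → Fin n → ℝ := fun a k => (V3 a k + ∑ b, (∑ f, χ a b f * p f k) * V1 b
        + ∑ j, (∑ r, γ r k j * ((2 * e / m₀) * A a r - p a r)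
          - (e / m₀) * (dA a k j + dA a j k)) * V2 j) with hR
  -- temporal part
  have hT : ∀ k, ∑ i, (∑ b, (∑ f, χt x b f * Pt f i) * (∑ c, Js b c * V1 c)) * Jt i k
      = ∑ f, p f k * ∑ b, V1 b * ((∑ a, Js x a * χ a b f) - Hs x b f) := by
    intro k
    have e1 : ∀ b f, (∑ a, Js x a * χ a b f) - Hs x b f
        = ∑ y, ∑ z, χt x y z * Js y b * Js z f := fun b f => by rw [hχ]; ring
    simp only [e1]
    have e2 : ∑ i, (∑ b, (∑ f, χt x b f * Pt f i) * (∑ c, Js b c * V1 c)) * Jt i k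
        = ∑ b, ∑ f, χt x b f * (∑ c, Js b c * V1 c) * ∑ i, Pt f i * Jt i k := by
      simp only [Finset.sum_mul _ _ (Jt _ k)]
      rw [Finset.sum_comm]
      refine Finset.sum_congr rfl fun b _ => ?_
      simp only [Finset.sum_mul _ _ (∑ c, Js b c * V1 c), Finset.sum_mul _ _ (Jt _ k)]
      rw [Finset.sum_comm]
      refine Finset.sum_congr rfl fun f _ => ?_
      rw [Finset.mul_sum]
      exact Finset.sum_congr rfl fun i _ => by ring
    rw [e2]
    simp only [hP, Finset.mul_sum, Finset.sum_mul]
    -- LHS: ∑ b f a c ; RHS: ∑ f b y z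
    calc _ = ∑ b, ∑ a, ∑ f, ∑ c, χt x b f * (Js b c * V1 c) * (p a k * Js f a) :=
          Finset.sum_congr rfl fun b _ => Finset.sum_comm
      _ = ∑ a, ∑ b, ∑ f, ∑ c, χt x b f * (Js b c * V1 c) * (p a k * Js f a) := Finset.sum_comm
      _ = ∑ a, ∑ c, ∑ b, ∑ f, χt x b f * (Js b c * V1 c) * (p a k * Js f a) := by
          refine Finset.sum_congr rfl fun a _ => ?_
          rw [Finset.sum_comm_cycle]
      _ = _ := by
          refine Finset.sum_congr rfl fun a _ => Finset.sum_congr rfl fun c _ =>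
            Finset.sum_congr rfl fun b _ => Finset.sum_congr rfl fun f _ => by ring
  -- spatial part
  have hN : ∀ k j, ∑ i, ∑ l, (∑ r, γt r i l * ((2 * e / m₀) * At x r - Pt x r)
          - (e / m₀) * (dAt x i l + dAt x l i)) * Jt i k * Jt l j
      = (∑ a, Js x a * (∑ r, γ r k j * ((2 * e / m₀) * A a r - p a r)
          - (e / m₀) * (dA a k j + dA a j k))) + ∑ i, Pt x i * Ht i k j := by
    intro k j
    have s1 : ∑ i, ∑ l, (∑ r, γt r i l * ((2 * e / m₀) * At x r - Pt x r)) * Jt i k * Jt l j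
        = ∑ r, ((2 * e / m₀) * At x r - Pt x r) * ((∑ a, Jt r a * γ a k j) - Ht r k j) := by
      have e1 : ∀ r, (∑ a, Jt r a * γ a k j) - Ht r k j
        = ∑ y, ∑ z, γt r y z * Jt y k * Jt z j := fun r => by rw [hγ]; ring
      simp only [e1, Finset.sum_mul, Finset.mul_sum]
      rw [Finset.sum_comm_cycle]
      refine Finset.sum_congr rfl fun b _ => Finset.sum_congr rfl fun c _ =>
        Finset.sum_congr rfl fun f _ => by ring
    have s2 : ∑ r, ((2 * e / m₀) * At x r - Pt x r) * (∑ a, Jt r a * γ a k j)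
        = ∑ a, Js x a * ∑ r, γ r k j * ((2 * e / m₀) * A a r - p a r) := by
      have : ∑ r, ((2 * e / m₀) * At x r - Pt x r) * (∑ a, Jt r a * γ a k j)
        = ∑ a, γ a k j * ((2 * e / m₀) * (∑ r, At x r * Jt r a) - ∑ r, Pt x r * Jt r a) := by
        simp only [Finset.mul_sum]
        rw [Finset.sum_comm]
        refine Finset.sum_congr rfl fun a _ => ?_
        rw [← Finset.sum_sub_distrib, Finset.mul_sum]
        exact Finset.sum_congr rfl fun i _ => by ring
      rw [this]
      simp only [hP, hA, Finset.mul_sum]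
      rw [Finset.sum_comm]
      refine Finset.sum_congr rfl fun a _ => ?_
      rw [← Finset.sum_sub_distrib, Finset.mul_sum]
      exact Finset.sum_congr rfl fun i _ => by ring
    have s3 : ∑ i, ∑ l, dAt x i l * Jt i k * Jt l j
        = (∑ a, dA a k j * Js x a) - ∑ i, At x i * Ht i k j := by
      rw [← hdA]
      simp only [Finset.sum_mul, add_sub_cancel_right]
      refine Finset.sum_congr rfl fun a _ => Finset.sum_congr rfl fun c _ => by ring
    have s4 : ∑ i, ∑ l, dAt x l i * Jt i k * Jt l j
        = (∑ a, dA a j k * Js x a) - ∑ i, At x i * Ht i k j := by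
      simp only [hHt _ k j]
      rw [← hdA, Finset.sum_comm]
      simp only [Finset.sum_mul, add_sub_cancel_right]
    have s5 : ∑ i, ∑ l, (∑ r, γt r i l * ((2 * e / m₀) * At x r - Pt x r)
          - (e / m₀) * (dAt x i l + dAt x l i)) * Jt i k * Jt l j
        = ∑ i, ∑ l, (∑ r, γt r i l * ((2 * e / m₀) * At x r - Pt x r)) * Jt i k * Jt l j
          - (e / m₀) * (∑ i, ∑ l, dAt x i l * Jt i k * Jt l j
            + ∑ i, ∑ l, dAt x l i * Jt i k * Jt l j) := by
      simp only [mul_add, Finset.mul_sum (s := Finset.univ) (a := e / m₀), sub_mul, add_mul,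
        Finset.sum_sub_distrib, Finset.sum_add_distrib, mul_assoc]
    have s6 : ∑ r, ((2 * e / m₀) * At x r - Pt x r) * ((∑ a, Jt r a * γ a k j) - Ht r k j)
        = ∑ r, ((2 * e / m₀) * At x r - Pt x r) * (∑ a, Jt r a * γ a k j)
          - ((2 * e / m₀) * ∑ i, At x i * Ht i k j - ∑ i, Pt x i * Ht i k j) := by
      rw [Finset.mul_sum, ← Finset.sum_sub_distrib, ← Finset.sum_sub_distrib]
      exact Finset.sum_congr rfl fun i _ => by ring
    have s7 : (∑ a, Js x a * (∑ r, γ r k j * ((2 * e / m₀) * A a r - p a r)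
          - (e / m₀) * (dA a k j + dA a j k)))
        = (∑ a, Js x a * ∑ r, γ r k j * ((2 * e / m₀) * A a r - p a r))
          - (e / m₀) * (∑ a, dA a k j * Js x a + ∑ a, dA a j k * Js x a) := by
      rw [← Finset.sum_add_distrib, Finset.mul_sum, ← Finset.sum_sub_distrib]
      exact Finset.sum_congr rfl fun i _ => by ring
    rw [s5, s1, s6, s2, s3, s4, s7]
    ring
  have hcon : ∀ k, ∑ i, L i * Jt i k = ∑ a, Js x a * R a k := by
    intro k
    have hS : ∑ i, (∑ l, (∑ r, γt r i l * ((2 * e / m₀) * At x r - Pt x r)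
          - (e / m₀) * (dAt x i l + dAt x l i)) * (∑ c, Jt l c * V2 c)) * Jt i k
        = ∑ j, ((∑ a, Js x a * (∑ r, γ r k j * ((2 * e / m₀) * A a r - p a r)
          - (e / m₀) * (dA a k j + dA a j k))) + ∑ i, Pt x i * Ht i k j) * V2 j := by
      simp only [← hN]
      exact contr_alg Jt V2 k (fun i l => ∑ r, γt r i l * ((2 * e / m₀) * At x r - Pt x r)
          - (e / m₀) * (dAt x i l + dAt x l i))
    have hd := hdP k
    have q1 : ∑ i, L i * Jt i k = ∑ i, dP i * Jt i k
        + ∑ i, (∑ b, (∑ f, χt x b f * Pt f i) * (∑ c, Js b c * V1 c)) * Jt i k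
        + ∑ i, (∑ l, (∑ r, γt r i l * ((2 * e / m₀) * At x r - Pt x r)
          - (e / m₀) * (dAt x i l + dAt x l i)) * (∑ c, Jt l c * V2 c)) * Jt i k := by
      rw [← Finset.sum_add_distrib, ← Finset.sum_add_distrib]
      exact Finset.sum_congr rfl fun i _ => by rw [hL]; simp only [add_mul]
    rw [q1, hT, hS]
    have q2 : ∑ i, Pt x i * ∑ j, Ht i k j * V2 j = ∑ j, (∑ i, Pt x i * Ht i k j) * V2 j := by
      simp only [Finset.mul_sum, Finset.sum_mul]
      rw [Finset.sum_comm]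
      exact Finset.sum_congr rfl fun a _ => Finset.sum_congr rfl fun k _ => by ring
    have q3 : ∑ f, p f k * ∑ b, V1 b * ((∑ a, Js x a * χ a b f) - Hs x b f)
        = (∑ a, Js x a * ∑ b, (∑ f, χ a b f * p f k) * V1 b)
          - ∑ a, p a k * ∑ b, Hs x a b * V1 b := by
      have : ∑ a, Js x a * ∑ b, (∑ f, χ a b f * p f k) * V1 b
          = ∑ f, p f k * ∑ b, V1 b * (∑ a, Js x a * χ a b f) := by
        simp only [Finset.mul_sum, Finset.sum_mul]
        rw [Finset.sum_comm_cycle]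
        refine Finset.sum_congr rfl fun f _ => ?_
        rw [Finset.sum_comm]
        exact Finset.sum_congr rfl fun a _ => Finset.sum_congr rfl fun k _ => by ring
      rw [this, ← Finset.sum_sub_distrib]
      refine Finset.sum_congr rfl fun f _ => ?_
      rw [← mul_sub, ← Finset.sum_sub_distrib]
      congr 1
      refine Finset.sum_congr rfl fun b _ => ?_
      rw [hHs x b f]; ring
    have q4 : ∑ a, Js x a * R a k = ∑ a, V3 a k * Js x a
        + (∑ a, Js x a * ∑ b, (∑ f, χ a b f * p f k) * V1 b)
        + ∑ j, (∑ a, Js x a * (∑ r, γ r k j * ((2 * e / m₀) * A a r - p a r)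
          - (e / m₀) * (dA a k j + dA a j k))) * V2 j := by
      have : ∑ j, (∑ a, Js x a * (∑ r, γ r k j * ((2 * e / m₀) * A a r - p a r)
          - (e / m₀) * (dA a k j + dA a j k))) * V2 j
          = ∑ a, Js x a * ∑ j, (∑ r, γ r k j * ((2 * e / m₀) * A a r - p a r)
          - (e / m₀) * (dA a k j + dA a j k)) * V2 j := by
        simp only [Finset.sum_mul _ _ (V2 _), Finset.mul_sum _ _ (Js x _)]
        rw [Finset.sum_comm]
        exact Finset.sum_congr rfl fun a _ => Finset.sum_congr rfl fun k _ => by rw [mul_assoc]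
      rw [this, ← Finset.sum_add_distrib, ← Finset.sum_add_distrib]
      refine Finset.sum_congr rfl fun a _ => ?_
      rw [hR]
      simp only [mul_add, mul_comm (V3 a k)]
    rw [q3, q4]
    rw [q2, Finset.sum_add_distrib] at hd
    simp only [add_mul, Finset.sum_add_distrib]
    linarith
  have hinv : Jt * Jt⁻¹ = 1 := Matrix.mul_nonsing_inv _ hJt
  have hLi : L i = ∑ k, (∑ i', L i' * Jt i' k) * Jt⁻¹ k i := by
    have := congrFun (Matrix.vecMul_one L) i
    rw [← hinv, ← Matrix.vecMul_vecMul] at this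
    rw [← this]
    simp only [Matrix.vecMul, dotProduct]
  change L i = ∑ a, ∑ k, Js x a * Jt⁻¹ k i * R a k
  rw [hLi]
  simp only [hcon, Finset.sum_mul]
  rw [Finset.sum_comm]
  exact Finset.sum_congr rfl fun a _ => Finset.sum_congr rfl fun k _ => by ring

/-- The pair `(N₁_{(i)b}^{(a)}, N₂_{(i)j}^{(a)})` is a nonlinear
connection on the dual 1-jet space: under any change of coordinates induced by
diffeomorphisms `σ : T → T̃` and `τ : X → X̃` (with the metrics, the potentials and
the polymomenta transforming tensorially), the local 1-forms
`δp^a_i = dp^a_i + N₁_{(i)b}^{(a)} dt^b + N₂_{(i)j}^{(a)} dx^j` transform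
tensorially: `δp̃^ã_ĩ = (∂t̃^ã/∂t^a)(∂x^i/∂x̃^ĩ) δp^a_i`, i.e., the two 1-forms
agree on every tangent vector of `T × X × ℝ^{m·n}`. -/
theorem nonlinear_connection_of_electrodynamics_transforms_tensorially
    {m n : ℕ} (hm : 1 ≤ m) (hn : 1 ≤ n)
    (T Ttil : Set (Fin m → ℝ)) (X Xtil : Set (Fin n → ℝ))
    (hT : IsOpen T) (hTtil : IsOpen Ttil) (hX : IsOpen X) (hXtil : IsOpen Xtil)
    (σ : (Fin m → ℝ) → (Fin m → ℝ)) (τ : (Fin n → ℝ) → (Fin n → ℝ))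
    (hσsm : ContDiffOn ℝ (⊤ : ℕ∞) σ T) (hσbij : Set.BijOn σ T Ttil)
    (hσJ : ∀ t ∈ T, IsUnit (jacobian σ t).det)
    (hτsm : ContDiffOn ℝ (⊤ : ℕ∞) τ X) (hτbij : Set.BijOn τ X Xtil)
    (hτJ : ∀ x ∈ X, IsUnit (jacobian τ x).det)
    (h htil : (Fin m → ℝ) → Matrix (Fin m) (Fin m) ℝ)
    (hsm : ∀ a b, ContDiffOn ℝ (⊤ : ℕ∞) (fun t => h t a b) T)
    (hpos : ∀ t ∈ T, (h t).PosDef)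
    (htilsm : ∀ a b, ContDiffOn ℝ (⊤ : ℕ∞) (fun t => htil t a b) Ttil)
    (φ φtil : (Fin n → ℝ) → Matrix (Fin n) (Fin n) ℝ)
    (φsm : ∀ i j, ContDiffOn ℝ (⊤ : ℕ∞) (fun x => φ x i j) X)
    (φsymm : ∀ x ∈ X, (φ x).IsSymm) (φinv : ∀ x ∈ X, IsUnit (φ x).det)
    (φtilsm : ∀ i j, ContDiffOn ℝ (⊤ : ℕ∞) (fun x => φtil x i j) Xtil)
    (m₀ e : ℝ) (hm₀ : m₀ ≠ 0)
    (A Atil : Fin m → Fin n → (Fin m → ℝ) × (Fin n → ℝ) → ℝ)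
    (hA : ∀ a i, ContDiffOn ℝ (⊤ : ℕ∞) (A a i) (T ×ˢ X))
    (hAtil : ∀ a i, ContDiffOn ℝ (⊤ : ℕ∞) (Atil a i) (Ttil ×ˢ Xtil))
    -- the transformation law of the temporal metric:
    -- `h̃_{ãb̃}(t̃) = h_{ab}(t) (∂t^a/∂t̃^ã)(∂t^b/∂t̃^b̃)`
    (hhtrans : ∀ t ∈ T, ∀ atil btil : Fin m,
      htil (σ t) atil btil
        = ∑ a, ∑ b, h t a b * (jacobian σ t)⁻¹ a atil * (jacobian σ t)⁻¹ b btil)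
    -- the transformation law of the spatial metric:
    -- `φ̃_{ĩj̃}(x̃) = φ_{ij}(x) (∂x^i/∂x̃^ĩ)(∂x^j/∂x̃^j̃)`
    (hφtrans : ∀ x ∈ X, ∀ itil jtil : Fin n,
      φtil (τ x) itil jtil
        = ∑ i, ∑ j, φ x i j * (jacobian τ x)⁻¹ i itil * (jacobian τ x)⁻¹ j jtil)
    -- the transformation law of the electromagnetic potentials:
    -- `Ã^{(ã)}_{(ĩ)} = A^{(a)}_{(i)} (∂t̃^ã/∂t^a)(∂x^i/∂x̃^ĩ)`
    (hAtrans : ∀ t ∈ T, ∀ x ∈ X, ∀ atil : Fin m, ∀ itil : Fin n,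
      Atil atil itil (σ t, τ x)
        = ∑ a, ∑ i, A a i (t, x) * jacobian σ t atil a * (jacobian τ x)⁻¹ i itil) :
    -- the induced transformation of the dual 1-jet space, including the
    -- polymomenta transformation `p̃^ã_ĩ = p^a_i (∂t̃^ã/∂t^a)(∂x^i/∂x̃^ĩ)`
    ∀ t ∈ T, ∀ x ∈ X, ∀ p : Fin m → Fin n → ℝ, ∀ atil : Fin m, ∀ itil : Fin n,
      ∀ V : Jet m n,
        deltaPform htil φtil Atil e m₀ atil itil
          ((fun q : Jet m n => ((σ q.1, τ q.2.1,
              fun atil' itil' => ∑ a, ∑ i, q.2.2 a i * jacobian σ q.1 atil' a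
                * (jacobian τ q.2.1)⁻¹ i itil') : Jet m n)) (t, x, p))
          (fderiv ℝ (fun q : Jet m n => ((σ q.1, τ q.2.1,
              fun atil' itil' => ∑ a, ∑ i, q.2.2 a i * jacobian σ q.1 atil' a
                * (jacobian τ q.2.1)⁻¹ i itil') : Jet m n)) (t, x, p) V)
        = ∑ a, ∑ i, jacobian σ t atil a * (jacobian τ x)⁻¹ i itil
            * deltaPform h φ A e m₀ a i (t, x, p) V := by
  intro t ht x hx p atil itil V
  have hσt : ContDiffAt ℝ (⊤ : ℕ∞) σ t := hσsm.contDiffAt (hT.mem_nhds ht)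
  have hτx : ContDiffAt ℝ (⊤ : ℕ∞) τ x := hτsm.contDiffAt (hX.mem_nhds hx)
  have hσd : DifferentiableAt ℝ σ t := hσt.differentiableAt (by simp)
  have hτd : DifferentiableAt ℝ τ x := hτx.differentiableAt (by simp)
  have hJσd : ∀ a b, DifferentiableAt ℝ (fun s => jacobian σ s a b) t := fun a b =>
    (jac_contDiffAt hσt a b).differentiableAt (by simp)
  have hJτd : ∀ a b, DifferentiableAt ℝ (fun s => jacobian τ s a b) x := fun a b =>
    (jac_contDiffAt hτx a b).differentiableAt (by simp)
  have hKd : ∀ a b, DifferentiableAt ℝ (fun s => (jacobian τ s)⁻¹ a b) x := fun a b =>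
    inv_entry_diff hJτd (hτJ x hx) a b
  have hσT : σ t ∈ Ttil := hσbij.mapsTo ht
  have hτX : τ x ∈ Xtil := hτbij.mapsTo hx
  -- contraction with the inverse Jacobian
  have hcontr : ∀ y ∈ X, ∀ (B : Fin m → Fin n → ℝ) (c : Fin m → ℝ) (k : Fin n),
      ∑ i', (∑ a, ∑ i, B a i * c a * (jacobian τ y)⁻¹ i i') * jacobian τ y i' k
        = ∑ a, B a k * c a := by
    intro y hy B c k
    have hinv : (jacobian τ y)⁻¹ * jacobian τ y = 1 := Matrix.nonsing_inv_mul _ (hτJ y hy)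
    have h1 : ∀ i, ∑ i', (jacobian τ y)⁻¹ i i' * jacobian τ y i' k
        = (1 : Matrix (Fin n) (Fin n) ℝ) i k := by
      intro i; rw [← hinv, Matrix.mul_apply]
    calc _ = ∑ a, ∑ i, B a i * c a * ∑ i', (jacobian τ y)⁻¹ i i' * jacobian τ y i' k := by
          simp only [Finset.mul_sum, Finset.sum_mul]
          rw [Finset.sum_comm]
          refine Finset.sum_congr rfl fun a _ => ?_
          rw [Finset.sum_comm]
          exact Finset.sum_congr rfl fun i _ => Finset.sum_congr rfl fun j _ => by ring
      _ = _ := by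
          simp [h1, Matrix.one_apply]
  have hAd : ∀ a i, DifferentiableAt ℝ (A a i) (t, x) := fun a i =>
    ((hA a i).contDiffAt ((hT.prod hX).mem_nhds ⟨ht, hx⟩)).differentiableAt (by simp)
  have hAtd : ∀ a i, DifferentiableAt ℝ (Atil a i) (σ t, τ x) := fun a i =>
    ((hAtil a i).contDiffAt ((hTtil.prod hXtil).mem_nhds ⟨hσT, hτX⟩)).differentiableAt (by simp)
  have hAd' : ∀ a i, DifferentiableAt ℝ (fun y => A a i (t, y)) x := fun a i =>
    ((hAd a i).hasFDerivAt.comp x (hasFDerivAt_prodMk_right t x)).differentiableAt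
  have hAtd' : ∀ a i, DifferentiableAt ℝ (fun y => Atil a i (σ t, y)) (τ x) := fun a i =>
    ((hAtd a i).hasFDerivAt.comp (τ x) (hasFDerivAt_prodMk_right (σ t) (τ x))).differentiableAt
  have hAtd'' : ∀ a i, DifferentiableAt ℝ (fun y => Atil a i (σ t, τ y)) x := fun a i =>
    (hAtd' a i).comp x hτd
  have hArel : ∀ y ∈ X, ∀ a' k, ∑ i, Atil a' i (σ t, τ y) * jacobian τ y i k
      = ∑ a, A a k (t, y) * jacobian σ t a' a := by
    intro y hy a' k
    simp only [hAtrans t ht y hy]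
    exact hcontr y hy (fun a i => A a i (t, y)) (fun a => jacobian σ t a' a) k
  have hdA : ∀ a' k j, (∑ i, (∑ l, pdx (Atil a' i) l (σ t, τ x) * jacobian τ x l j)
        * jacobian τ x i k) + ∑ i, Atil a' i (σ t, τ x) * pd (fun s => jacobian τ s i k) j x
      = ∑ a, pdx (A a k) j (t, x) * jacobian σ t a' a := by
    intro a' k j
    have := pd_congr j hX hx (fun y hy => hArel y hy a' k)
    rw [pd_sum j (fun i => (hAtd'' a' i).fun_mul (hJτd i k)),
      pd_sum j (fun a => (hAd' a k).fun_mul (differentiableAt_const _))] at this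
    rw [← Finset.sum_add_distrib]
    refine Eq.trans (Finset.sum_congr rfl fun i _ => ?_)
      (this.trans (Finset.sum_congr rfl fun a _ => ?_))
    · rw [pd_mul j (hAtd'' a' i) (hJτd i k), pd_comp hτd (hAtd' a' i)]
      simp only [pdx_eq (hAtd a' i)]
    · rw [pd_mul j (hAd' a k) (differentiableAt_const _), pdx_eq (hAd a k)]
      simp [pd]
  -- the derivative of the induced transformation
  have hq1 : HasFDerivAt (fun q : Jet m n => q.1)
      (ContinuousLinearMap.fst ℝ (Fin m → ℝ) ((Fin n → ℝ) × (Fin m → Fin n → ℝ))) (t, x, p) :=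
    hasFDerivAt_fst
  have hq2 : HasFDerivAt (fun q : Jet m n => q.2.1)
      ((ContinuousLinearMap.fst ℝ (Fin n → ℝ) (Fin m → Fin n → ℝ)).comp
        (ContinuousLinearMap.snd ℝ (Fin m → ℝ) ((Fin n → ℝ) × (Fin m → Fin n → ℝ)))) (t, x, p) :=
    ((ContinuousLinearMap.fst ℝ (Fin n → ℝ) (Fin m → Fin n → ℝ)).comp
        (ContinuousLinearMap.snd ℝ (Fin m → ℝ) ((Fin n → ℝ) × (Fin m → Fin n → ℝ)))).hasFDerivAt
  have hq3 : ∀ a i, HasFDerivAt (fun q : Jet m n => q.2.2 a i)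
      (((ContinuousLinearMap.proj i : (Fin n → ℝ) →L[ℝ] ℝ).comp
        (ContinuousLinearMap.proj a : (Fin m → Fin n → ℝ) →L[ℝ] (Fin n → ℝ))).comp
      ((ContinuousLinearMap.snd ℝ (Fin n → ℝ) (Fin m → Fin n → ℝ)).comp
        (ContinuousLinearMap.snd ℝ (Fin m → ℝ) ((Fin n → ℝ) × (Fin m → Fin n → ℝ)))))
        (t, x, p) := fun a i =>
    (((ContinuousLinearMap.proj i : (Fin n → ℝ) →L[ℝ] ℝ).comp
        (ContinuousLinearMap.proj a : (Fin m → Fin n → ℝ) →L[ℝ] (Fin n → ℝ))).comp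
      ((ContinuousLinearMap.snd ℝ (Fin n → ℝ) (Fin m → Fin n → ℝ)).comp
        (ContinuousLinearMap.snd ℝ (Fin m → ℝ)
          ((Fin n → ℝ) × (Fin m → Fin n → ℝ))))).hasFDerivAt
  have hJσq : ∀ a b, HasFDerivAt (fun q : Jet m n => jacobian σ q.1 a b) _ (t, x, p) :=
    fun a b => HasFDerivAt.comp (g := fun s => jacobian σ s a b) (t, x, p)
      (hJσd a b).hasFDerivAt hq1
  have hJτq : ∀ a b, HasFDerivAt (fun q : Jet m n => jacobian τ q.2.1 a b) _ (t, x, p) :=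
    fun a b => HasFDerivAt.comp (g := fun s => jacobian τ s a b) (t, x, p)
      (hJτd a b).hasFDerivAt hq2
  have hKq : ∀ a b, HasFDerivAt (fun q : Jet m n => (jacobian τ q.2.1)⁻¹ a b) _ (t, x, p) :=
    fun a b => HasFDerivAt.comp (g := fun s => (jacobian τ s)⁻¹ a b) (t, x, p)
      (hKd a b).hasFDerivAt hq2
  set P : Jet m n → Fin m → Fin n → ℝ := fun q atil' itil' =>
    ∑ a, ∑ i, q.2.2 a i * jacobian σ q.1 atil' a * (jacobian τ q.2.1)⁻¹ i itil' with hPdef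
  have hPe : ∀ a' i', DifferentiableAt ℝ (fun q => P q a' i') (t, x, p) := by
    intro a' i'
    refine DifferentiableAt.fun_sum fun a _ => DifferentiableAt.fun_sum fun i _ => ?_
    exact (((hq3 a i).differentiableAt).fun_mul (hJσq a' a).differentiableAt).fun_mul
      (hKq i i').differentiableAt
  have hPd : DifferentiableAt ℝ P (t, x, p) :=
    differentiableAt_pi.2 fun a' => differentiableAt_pi.2 fun i' => hPe a' i'
  have hΦ : HasFDerivAt (fun q : Jet m n => ((σ q.1, τ q.2.1, P q) : Jet m n))
      (((fderiv ℝ σ t).comp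
        (ContinuousLinearMap.fst ℝ (Fin m → ℝ) ((Fin n → ℝ) × (Fin m → Fin n → ℝ)))).prod
      (((fderiv ℝ τ x).comp ((ContinuousLinearMap.fst ℝ (Fin n → ℝ) (Fin m → Fin n → ℝ)).comp
        (ContinuousLinearMap.snd ℝ (Fin m → ℝ) ((Fin n → ℝ) × (Fin m → Fin n → ℝ))))).prod
        (fderiv ℝ P (t, x, p)))) (t, x, p) :=
    (HasFDerivAt.comp (g := σ) (t, x, p) hσd.hasFDerivAt hq1).prodMk
      ((HasFDerivAt.comp (g := τ) (t, x, p) hτd.hasFDerivAt hq2).prodMk hPd.hasFDerivAt)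
  have hPrel : ∀ q : Jet m n, q.2.1 ∈ X → ∀ a' k, ∑ i, P q a' i * jacobian τ q.2.1 i k
      = ∑ a, q.2.2 a k * jacobian σ q.1 a' a := by
    intro q hq a' k
    exact hcontr q.2.1 hq q.2.2 (fun a => jacobian σ q.1 a' a) k
  have hP1 : ∀ i', HasFDerivAt (fun q => P q atil i')
      ((ContinuousLinearMap.proj i' : (Fin n → ℝ) →L[ℝ] ℝ).comp
        ((ContinuousLinearMap.proj atil : (Fin m → Fin n → ℝ) →L[ℝ] (Fin n → ℝ)).comp
          (fderiv ℝ P (t, x, p)))) (t, x, p) := fun i' =>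
    hasFDerivAt_pi'.1 (hasFDerivAt_pi'.1 hPd.hasFDerivAt atil) i'
  have hdP : ∀ k, (∑ i, fderiv ℝ P (t, x, p) V atil i * jacobian τ x i k)
      + ∑ i, P (t, x, p) atil i * ∑ j, pd (fun s => jacobian τ s i k) j x * V.2.1 j
      = ∑ a, (V.2.2 a k * jacobian σ t atil a
        + p a k * ∑ b, pd (fun s => jacobian σ s atil a) b t * V.1 b) := by
    intro k
    have d1 := HasFDerivAt.fun_sum (u := Finset.univ) fun i _ => (hP1 i).fun_mul (hJτq i k)
    have d2 := HasFDerivAt.fun_sum (u := Finset.univ) fun a _ => (hq3 a k).fun_mul (hJσq atil a)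
    have hev : (fun q : Jet m n => ∑ i, P q atil i * jacobian τ q.2.1 i k)
        =ᶠ[nhds (t, x, p)] fun q => ∑ a, q.2.2 a k * jacobian σ q.1 atil a := by
      have hopen : IsOpen {q : Jet m n | q.2.1 ∈ X} :=
        hX.preimage (continuous_fst.comp continuous_snd)
      filter_upwards [hopen.mem_nhds (show (t, x, p) ∈ {q : Jet m n | q.2.1 ∈ X} from hx)]
        with q hq using hPrel q hq atil k
    have d3 := d1.unique (d2.congr_of_eventuallyEq hev)
    have d4 := congrArg (fun L => L V) d3
    simp only [ContinuousLinearMap.sum_apply, ContinuousLinearMap.add_apply,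
      ContinuousLinearMap.smul_apply, ContinuousLinearMap.comp_apply, smul_eq_mul,
      ContinuousLinearMap.proj_apply, ContinuousLinearMap.coe_fst', ContinuousLinearMap.coe_snd',
      fderiv_eq_sum_pd] at d4
    rw [← Finset.sum_add_distrib]
    refine Eq.trans (Finset.sum_congr rfl fun i _ => ?_)
      (d4.trans (Finset.sum_congr rfl fun a _ => ?_))
    · ring
    · ring
  rw [hΦ.fderiv]
  simp only [deltaPform, N1, N2, ContinuousLinearMap.prod_apply, ContinuousLinearMap.comp_apply,
    ContinuousLinearMap.coe_fst', ContinuousLinearMap.coe_snd', fderiv_comp_apply' hσd,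
    fderiv_comp_apply' hτd]
  refine final_alg (jacobian σ t) (jacobian τ x) (hτJ x hx)
    (fun a b c => christoffel h a b c t) (fun a b c => christoffel htil a b c (σ t))
    (fun a b c => pd (fun s => jacobian σ s a b) c t)
    (fun a b c => christoffel φ a b c x) (fun a b c => christoffel φtil a b c (τ x))
    (fun a b c => pd (fun s => jacobian τ s a b) c x)
    (fun a b c => christoffel_law T Ttil hT hTtil σ hσsm hσbij hσJ h htil ?_ ?_ htilsm hhtrans
      t ht a b c)
    (fun a b c => jac_symm hσt a b c)
    (fun a b c => christoffel_law X Xtil hX hXtil τ hτsm hτbij hτJ φ φtil φsymm φinv φtilsm hφtrans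
      x hx a b c)
    (fun a b c => jac_symm hτx a b c)
    p (P (t, x, p)) (fun a i => A a i (t, x)) (fun a i => Atil a i (σ t, τ x))
    (fun a i j => pdx (A a i) j (t, x)) (fun a i j => pdx (Atil a i) j (σ t, τ x))
    (hPrel (t, x, p) hx) (hArel x hx) hdA V.1 V.2.1 V.2.2
    (fun i => fderiv ℝ P (t, x, p) V atil i) atil hdP e m₀ itil
  · intro s hs
    have := (hpos s hs).isHermitian
    rwa [Matrix.IsHermitian, Matrix.conjTranspose_eq_transpose_of_trivial] at this
  · intro s hs
    exact (hpos s hs).det_pos.ne'.isUnit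

end
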